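/- arXiv:2009.00150 — 2 statements merged into one kernel-verified Lean document; each statement's English description precedes it below -/
import Mathlib

section
/- Let (Ω, ℱ, P) be a probability space with a filtration (ℱ_k)_{k∈ℕ}, let ν : Ω → ℕ be a measurable random variable (the change time), and define M̂_k := P(ν ≤ k | ℱ_k) = E[1_{{ν ≤ k}} | ℱ_k]. Let h ∈ [0,1] and let τ be a stopping time with respect to (ℱ_k) that is almost surely finite and satisfies M̂_τ ≥ h almost surely (as holds for the threshold rule τ = inf{k ≥ 0 : M̂_k ≥ h} whenever it is almost surely finite). Then the probability of false alarm satisfies PFA(τ) := P(τ < ν) ≤ 1 − h. -/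
open MeasureTheory Finset
open scoped ENNReal

/-! On `{τ = k}` the posterior `M̂_k` is at least `h`. Integrating it over this event, which lies in
`ℱ_k`, replaces it by `1_{ν ≤ k}`, so that the change has occurred by time `k` on a proportion at
least `h` of `{τ = k}`. The false alarms are thus a proportion at most `1 - h` of each of the
disjoint events `{τ = k}`, and hence of their union `{τ < ∞}`. -/

section

open scoped ProbabilityTheory

variable {Ω ι : Type*} {m₀ m : MeasurableSpace Ω} {μ : Measure Ω} [IsFiniteMeasure μ] {h : ℝ}

lemma mul_measureReal_le_measureReal_inter_of_le_condProb (hm : m₀ ≤ m) {A B : Set Ω}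
    (hA : MeasurableSet[m₀] A) (hB : MeasurableSet B)
    (hle : ∀ᵐ ω ∂μ, ω ∈ A → h ≤ (μ⟦B | m₀⟧) ω) :
    h * μ.real A ≤ μ.real (A ∩ B) :=
  calc h * μ.real A = ∫ _ in A, h ∂μ := by rw [setIntegral_const, smul_eq_mul, mul_comm]
    _ ≤ ∫ ω in A, (μ⟦B | m₀⟧) ω ∂μ :=
      setIntegral_mono_on_ae integrableOn_const integrable_condExp.integrableOn (hm A hA) hle
    _ = ∫ ω in A, B.indicator (fun _ => (1 : ℝ)) ω ∂μ :=
      setIntegral_condExp hm ((integrable_const 1).indicator hB) hA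
    _ = μ.real (A ∩ B) := by rw [setIntegral_indicator hB, setIntegral_const, smul_eq_mul, mul_one]

lemma measure_sdiff_le_of_le_condProb (hm : m₀ ≤ m) {A B : Set Ω}
    (hA : MeasurableSet[m₀] A) (hB : MeasurableSet B)
    (hle : ∀ᵐ ω ∂μ, ω ∈ A → h ≤ (μ⟦B | m₀⟧) ω) :
    μ (A \ B) ≤ ENNReal.ofReal (1 - h) * μ A := by
  have hinter : h * μ.real A ≤ μ.real (A ∩ B) :=
    mul_measureReal_le_measureReal_inter_of_le_condProb hm hA hB hle
  have hsplit : μ.real (A ∩ B) + μ.real (A \ B) = μ.real A := measureReal_inter_add_sdiff hB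
  rw [← ofReal_measureReal (s := A), ← ofReal_measureReal (s := A \ B),
    ← ENNReal.ofReal_mul' measureReal_nonneg]
  exact ENNReal.ofReal_le_ofReal (by linarith)

lemma measure_iUnion_sdiff_le_of_le_condProb [Countable ι] {𝓖 : ι → MeasurableSpace Ω}
    (h𝓖 : ∀ k, 𝓖 k ≤ m) {A B : ι → Set Ω} (hA : ∀ k, MeasurableSet[𝓖 k] (A k))
    (hdisj : Pairwise (Function.onFun Disjoint A)) (hB : ∀ k, MeasurableSet (B k))
    (hle : ∀ k, ∀ᵐ ω ∂μ, ω ∈ A k → h ≤ (μ⟦B k | 𝓖 k⟧) ω) :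
    μ (⋃ k, A k \ B k) ≤ ENNReal.ofReal (1 - h) * μ (⋃ k, A k) :=
  calc μ (⋃ k, A k \ B k) ≤ ∑' k, μ (A k \ B k) := measure_iUnion_le _
    _ ≤ ∑' k, ENNReal.ofReal (1 - h) * μ (A k) := ENNReal.tsum_le_tsum fun k =>
      measure_sdiff_le_of_le_condProb (h𝓖 k) (hA k) (hB k) (hle k)
    _ = ENNReal.ofReal (1 - h) * μ (⋃ k, A k) := by
      rw [ENNReal.tsum_mul_left, measure_iUnion hdisj fun k => h𝓖 k _ (hA k)]

theorem probability_false_alarm_le_general [PartialOrder ι] [Countable ι] {ℱ : Filtration ι m}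
    {ν τ : Ω → WithTop ι} (hν : ∀ k : ι, MeasurableSet {ω | ν ω ≤ k}) (hτ : IsStoppingTime ℱ τ)
    (hthresh : ∀ᵐ ω ∂μ, ∀ k : ι, τ ω = k → h ≤ (μ⟦{ω | ν ω ≤ k} | ℱ k⟧) ω) :
    μ {ω | τ ω < ν ω} ≤ ENNReal.ofReal (1 - h) * μ {ω | τ ω ≠ ⊤} := by
  have hdisj : Pairwise (Function.onFun Disjoint fun k : ι => {ω | τ ω = k}) :=
    fun i j hij => Set.disjoint_left.2 fun ω (hi : τ ω = i) (hj : τ ω = j) =>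
      hij (WithTop.coe_injective (hi.symm.trans hj))
  have hfalse : {ω | τ ω < ν ω} ⊆ ⋃ k : ι, {ω | τ ω = k} \ {ω | ν ω ≤ k} := by
    intro ω (hω : τ ω < ν ω)
    obtain ⟨k, hk⟩ := WithTop.ne_top_iff_exists.1 hω.ne_top
    exact Set.mem_iUnion.2 ⟨k, hk.symm, (hk ▸ hω).not_ge⟩
  have hfinite : ⋃ k : ι, {ω | τ ω = k} ⊆ {ω | τ ω ≠ ⊤} :=
    Set.iUnion_subset fun k ω (hk : τ ω = k) => WithTop.ne_top_iff_exists.2 ⟨k, hk.symm⟩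
  calc μ {ω | τ ω < ν ω} ≤ μ (⋃ k : ι, {ω | τ ω = k} \ {ω | ν ω ≤ k}) := measure_mono hfalse
    _ ≤ ENNReal.ofReal (1 - h) * μ (⋃ k : ι, {ω | τ ω = k}) :=
      measure_iUnion_sdiff_le_of_le_condProb ℱ.le hτ.measurableSet_eq_of_countable hdisj hν
        (ae_all_iff.1 hthresh)
    _ ≤ ENNReal.ofReal (1 - h) * μ {ω | τ ω ≠ ⊤} := by gcongr

end

/-- **PFA bound.** If `M̂_k := P(ν ≤ k | ℱ_k)`, `h ∈ [0,1]`, and `τ` is an a.s. finite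
stopping time with `M̂_τ ≥ h` a.s., then the probability of false alarm satisfies
`P(τ < ν) ≤ 1 − h`. -/
theorem probability_false_alarm_le
    {Ω : Type*} {m : MeasurableSpace Ω} (μ : Measure Ω) [IsProbabilityMeasure μ]
    (ℱ : Filtration ℕ m) (ν : Ω → ℕ) (hν : Measurable ν)
    (Mhat : ℕ → Ω → ℝ)
    (hMhat : ∀ k, Mhat k = μ[Set.indicator {ω | ν ω ≤ k} (fun _ => (1 : ℝ)) | ℱ k])
    (h : ℝ) (hh : h ∈ Set.Icc (0 : ℝ) 1)
    (τ : Ω → ℕ∞)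
    (hτ : ∀ k : ℕ, MeasurableSet[ℱ k] {ω | τ ω = (k : ℕ∞)})
    (hτfin : ∀ᵐ ω ∂μ, τ ω ≠ ⊤)
    (hthresh : ∀ᵐ ω ∂μ, h ≤ Mhat (τ ω).toNat ω) :
    μ {ω | τ ω < (ν ω : ℕ∞)} ≤ ENNReal.ofReal (1 - h) := by
  have hcast (k : ℕ) : {ω | (ν ω : ℕ∞) ≤ k} = {ω | ν ω ≤ k} := by simp only [Nat.cast_le]
  refine (probability_false_alarm_le_general (ν := fun ω => (ν ω : ℕ∞))
    (fun k => (hcast k).symm ▸ hν measurableSet_Iic) (isStoppingTime_of_measurableSet_eq hτ)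
    ?_).trans (mul_le_of_le_one_right' prob_le_one)
  filter_upwards [hthresh] with ω hω k (hk : τ ω = (k : ℕ∞))
  rw [hk, ENat.toNat_natCast, hMhat, ← hcast] at hω
  exact hω
end

section
/- Let N_α ≥ 1, N_β ≥ 1 and N = N_α + N_β. Let Δ = {z ∈ ℝ^N : z_i ≥ 0 for all i and ∑_i z_i = 1} be the standard probability simplex and let M : ℝ^N → ℝ be the linear map M(z) = ∑_{i < N_α} z_i. Suppose V : ℝ^N → ℝ is concave on Δ, satisfies 0 ≤ V(z) ≤ M(z) for all z ∈ Δ, and is constant on the level sets of M in Δ (i.e. V(z) = V(z′) whenever z, z′ ∈ Δ and M(z) = M(z′)). Then, with R := {z ∈ Δ : V(z) = M(z)}, there exists h ∈ [0,1] such that {z ∈ Δ : M(z) < h} ⊆ R ⊆ {z ∈ Δ : M(z) ≤ h}; that is, membership in the stopping set is determined (up to its boundary level) by comparing M(z) to a single threshold. -/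
open Finset

/-!
On the contact set `R = {V = M}`, the inequalities `V ≤ M`, `M` convex and `V` concave are all
forced to be equalities along segments: `R` is convex and `M` is affine on it. So `M(R)` is an
interval, and it starts at `0` because `V` is squeezed to `0` where `M` vanishes. Since `V` is
constant on the level sets of `M`, membership in `R` depends only on `M`, and the threshold is
`sup M(R)`.
-/

section Contact

variable {𝕜 E β : Type*} [Semiring 𝕜] [PartialOrder 𝕜] [AddCommMonoid E] [SMul 𝕜 E]
  [AddCommMonoid β] [PartialOrder β] [SMul 𝕜 β] {s : Set E} {f g : E → β}

theorem eq_combo_and_eq_combo_of_concaveOn_le_convexOn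
    (hf : ConcaveOn 𝕜 s f) (hg : ConvexOn 𝕜 s g) (hfg : ∀ x ∈ s, f x ≤ g x)
    {x y : E} (hx : x ∈ s) (hy : y ∈ s) (hfgx : f x = g x) (hfgy : f y = g y)
    {a b : 𝕜} (ha : 0 ≤ a) (hb : 0 ≤ b) (hab : a + b = 1) :
    f (a • x + b • y) = a • g x + b • g y ∧ g (a • x + b • y) = a • g x + b • g y := by
  have hlower : a • g x + b • g y ≤ f (a • x + b • y) := by
    simpa only [hfgx, hfgy] using hf.2 hx hy ha hb hab
  have hle : f (a • x + b • y) ≤ g (a • x + b • y) := hfg _ (hf.1 hx hy ha hb hab)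
  have hupper : g (a • x + b • y) ≤ a • g x + b • g y := hg.2 hx hy ha hb hab
  exact ⟨(hle.trans hupper).antisymm hlower, hupper.antisymm (hlower.trans hle)⟩

theorem convex_image_setOf_eq_of_concaveOn_le_convexOn
    (hf : ConcaveOn 𝕜 s f) (hg : ConvexOn 𝕜 s g) (hfg : ∀ x ∈ s, f x ≤ g x) :
    Convex 𝕜 (g '' {x ∈ s | f x = g x}) := by
  rintro _ ⟨x, ⟨hx, hfgx⟩, rfl⟩ _ ⟨y, ⟨hy, hfgy⟩, rfl⟩ a b ha hb hab
  obtain ⟨hfz, hgz⟩ :=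
    eq_combo_and_eq_combo_of_concaveOn_le_convexOn hf hg hfg hx hy hfgx hfgy ha hb hab
  exact ⟨a • x + b • y, ⟨hf.1 hx hy ha hb hab, hfz.trans hgz.symm⟩, hgz⟩

end Contact

theorem Ico_csSup_subset_of_ordConnected {α : Type*} [ConditionallyCompleteLinearOrder α]
    {S : Set α} {a : α} (hS : S.OrdConnected) (ha : a ∈ S) : Set.Ico a (sSup S) ⊆ S := by
  rintro x ⟨hax, hxS⟩
  obtain ⟨y, hy, hxy⟩ := exists_lt_of_lt_csSup ⟨a, ha⟩ hxS
  exact hS.out ha hy ⟨hax, hxy.le⟩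

theorem stopping_set_is_threshold_set_general {E : Type*} [AddCommMonoid E] [SMul ℝ E]
    {s : Set E} {V M : E → ℝ} {a b : ℝ} {e : E}
    (hV : ConcaveOn ℝ s V) (hM : ConvexOn ℝ s M) (hVM : ∀ z ∈ s, V z ≤ M z)
    (hMab : Set.MapsTo M s (Set.Icc a b))
    (hlevel : ∀ z ∈ s, ∀ z' ∈ s, M z = M z' → V z = V z')
    (he : e ∈ s) (hVe : V e = a) (hMe : M e = a) :
    ∃ h ∈ Set.Icc a b,
      {z ∈ s | M z < h} ⊆ {z ∈ s | V z = M z} ∧ {z ∈ s | V z = M z} ⊆ {z ∈ s | M z ≤ h} := by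
  set R : Set E := {z ∈ s | V z = M z}
  have hinterval : (M '' R).OrdConnected :=
    (convex_image_setOf_eq_of_concaveOn_le_convexOn hV hM hVM).ordConnected
  have ha : a ∈ M '' R := ⟨e, ⟨he, hVe.trans hMe.symm⟩, hMe⟩
  have hub : b ∈ upperBounds (M '' R) := by
    rintro _ ⟨z, hz, rfl⟩
    exact (hMab hz.1).2
  refine ⟨sSup (M '' R), ⟨le_csSup ⟨b, hub⟩ ha, csSup_le ⟨a, ha⟩ hub⟩, ?_,
    fun z hz => ⟨hz.1, le_csSup ⟨b, hub⟩ (Set.mem_image_of_mem M hz)⟩⟩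
  rintro z ⟨hz, hzh⟩
  obtain ⟨w, ⟨hw, hVw⟩, hwz⟩ := Ico_csSup_subset_of_ordConnected hinterval ha ⟨(hMab hz).1, hzh⟩
  exact ⟨hz, by rw [← hlevel w hw z hz hwz, hVw, hwz]⟩

theorem convexOn_sum_apply {𝕜 ι : Type*} [Semiring 𝕜] [PartialOrder 𝕜] {s : Set (ι → 𝕜)}
    (hs : Convex 𝕜 s) (A : Finset ι) : ConvexOn 𝕜 s fun z => ∑ i ∈ A, z i :=
  ⟨hs, fun _ _ _ _ _ _ _ _ _ => by simp [Finset.sum_add_distrib, Finset.mul_sum]⟩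

theorem sum_mem_Icc_of_mem_stdSimplex {𝕜 ι : Type*} [Semiring 𝕜] [PartialOrder 𝕜]
    [IsOrderedAddMonoid 𝕜] [Fintype ι] {z : ι → 𝕜} (hz : z ∈ stdSimplex 𝕜 ι) (A : Finset ι) :
    ∑ i ∈ A, z i ∈ Set.Icc 0 1 :=
  ⟨Finset.sum_nonneg fun i _ => hz.1 i,
    (Finset.sum_le_univ_sum_of_nonneg hz.1).trans_eq hz.2⟩

/-- **Corollary 1 (threshold structure).** If in addition `V` is constant on the level
sets of `M` in `Δ`, then the stopping set `R = {z ∈ Δ : V(z) = M(z)}` is determined by a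
single threshold `h ∈ [0,1]`: `{z ∈ Δ : M(z) < h} ⊆ R ⊆ {z ∈ Δ : M(z) ≤ h}`. -/
theorem stopping_set_is_threshold_set
    (Nα Nβ : ℕ) (hNα : 1 ≤ Nα) (hNβ : 1 ≤ Nβ)
    (Δ : Set (Fin (Nα + Nβ) → ℝ))
    (hΔ : Δ = {z | (∀ i, 0 ≤ z i) ∧ ∑ i, z i = 1})
    (M : (Fin (Nα + Nβ) → ℝ) → ℝ)
    (hM : ∀ z, M z = ∑ i ∈ Finset.univ.filter (fun i : Fin (Nα + Nβ) => (i : ℕ) < Nα), z i)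
    (V : (Fin (Nα + Nβ) → ℝ) → ℝ)
    (hVconc : ConcaveOn ℝ Δ V)
    (hVbd : ∀ z ∈ Δ, 0 ≤ V z ∧ V z ≤ M z)
    (hVlevel : ∀ z ∈ Δ, ∀ z' ∈ Δ, M z = M z' → V z = V z') :
    ∃ h ∈ Set.Icc (0 : ℝ) 1,
      {z ∈ Δ | M z < h} ⊆ {z ∈ Δ | V z = M z} ∧
      {z ∈ Δ | V z = M z} ⊆ {z ∈ Δ | M z ≤ h} := by
  obtain rfl : Δ = stdSimplex ℝ (Fin (Nα + Nβ)) := hΔ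
  let j : Fin (Nα + Nβ) := ⟨Nα, by omega⟩
  have he : Pi.single j 1 ∈ stdSimplex ℝ (Fin (Nα + Nβ)) := single_mem_stdSimplex ℝ j
  have hMe : M (Pi.single j 1) = 0 := by simp [hM, j]
  have hVe : V (Pi.single j 1) = 0 := ((hVbd _ he).2.trans_eq hMe).antisymm (hVbd _ he).1
  obtain rfl : M = _ := funext hM
  exact stopping_set_is_threshold_set_general hVconc
    (convexOn_sum_apply (convex_stdSimplex ℝ _) _) (fun z hz => (hVbd z hz).2)
    (fun z hz => sum_mem_Icc_of_mem_stdSimplex hz _) hVlevel he hVe hMe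
end
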